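/- arXiv:1711.02777 — 2 statements merged into one kernel-verified Lean document; each statement's English description precedes it below -/
import Mathlib

section
/- Let n ≥ 3 be odd, m = (n−1)/2, and fix integers 0 ≤ l ≤ m−1 and c ≥ 0. Then the maximum, over all pairs (z,t) with z ∈ P(m) satisfying z_1 = z_2 = ... = z_{l+1} = c and t ∈ T_l(z), of the quantity Σ_{i=l+1}^{m} z_i + l(c−1) + |t| − f_l(z,t), equals b(l,n,c); it is attained by some t ∈ T_l(z) at z = (c,c,...,c) (m copies). (Via the identity reg(J_{z,l}) = max_{t ∈ T_l(z)} (Σ_{i=l+1}^m z_i + l(z_1−1) + |t| − f_l(z,t)), this computes max{reg(J_{z,l}) : z_1 = ... = z_{l+1} = c} = reg(J_{(c^m),l}) = b(l,n,c).) -/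
/-- `IsPart k y`: `y` encodes a partition with at most `k` parts (1-indexed),
with `y i = 0` for `i = 0` and for `i > k`. -/
def IsPart (k : ℕ) (y : ℕ → ℤ) : Prop :=
  (∀ i, 1 ≤ i → i < k → y (i + 1) ≤ y i) ∧
  (∀ i, 1 ≤ i → i ≤ k → 0 ≤ y i) ∧
  (∀ i, i = 0 ∨ k < i → y i = 0)


/-- `z^{(2)}`: the sequence `(z₁,z₁,z₂,z₂,…)`, so `(z^{(2)})_j = z_{⌈j/2⌉}`,
regarded as a sequence of length `n` (padded with a final zero when `n` is odd,
which is automatic since `z i = 0` for `i > m`). -/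
def zdub (z : ℕ → ℤ) (j : ℕ) : ℤ := z ((j + 1) / 2)

/-- The set `𝒯_l(z)` of sequences `t = (t₁,…,t_{n-2l})` with `t₁ = l`,
`t₁ ≥ t₂ ≥ ⋯ ≥ t_{n-2l} ≥ 0`, and
`z^{(2)}_{2l+i} - z^{(2)}_{2l+i+1} ≥ 2t_i - 2t_{i+1}` for `1 ≤ i ≤ n-2l-1`
(encoded with `t i = 0` for `i = 0` and `i > n-2l`). -/
def Tset (n l : ℕ) (z : ℕ → ℤ) : Set (ℕ → ℤ) :=
  { t | t 1 = (l : ℤ) ∧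
    (∀ i, 1 ≤ i → i < n - 2 * l → t (i + 1) ≤ t i) ∧
    (∀ i, 1 ≤ i → i ≤ n - 2 * l → 0 ≤ t i) ∧
    (∀ i, i = 0 ∨ n - 2 * l < i → t i = 0) ∧
    (∀ i, 1 ≤ i → i ≤ n - 2 * l - 1 →
      2 * t i - 2 * t (i + 1) ≤ zdub z (2 * l + i) - zdub z (2 * l + i + 1)) }

/-- `|t| = t₁ + ⋯ + t_{n-2l}`. -/
def tsize (n l : ℕ) (t : ℕ → ℤ) : ℤ := ∑ i ∈ Finset.Icc 1 (n - 2 * l), t i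

/-- `f_l(z,t) = Σ_{i=1}^{n-2l-1} t_{i+1}((z^{(2)}_{2l+i} - z^{(2)}_{2l+i+1}) - (2t_i - 2t_{i+1}))`. -/
def ffun (n l : ℕ) (z t : ℕ → ℤ) : ℤ :=
  ∑ i ∈ Finset.Icc 1 (n - 2 * l - 1),
    t (i + 1) * ((zdub z (2 * l + i) - zdub z (2 * l + i + 1)) - (2 * t i - 2 * t (i + 1)))


/-- The function `b(l,n,c)` of equation (1.2). -/
def bfun (l n : ℕ) (c : ℤ) : ℤ :=
  if 2 * (l : ℤ) < c ∨ (c < 2 * (l : ℤ) ∧ Odd c) then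
    (((n / 2 : ℕ) : ℤ) - (l : ℤ)) * (2 * (l : ℤ) + c) + (l : ℤ) * (c - 1)
  else
    (((n / 2 : ℕ) : ℤ) - (l : ℤ)) * (2 * (l : ℤ) + c) + c * (l : ℤ) - c / 2

/-!
Fix `z` and `t`, and let `s` be the last term of `t`. As `t` decreases from `l`, one has
`|t| ≤ (n - 2l - 1) l + s`; as every term of `t` is at least `s`, `f_l(z,t)` is at least `s` times
the sum of the slacks in the inequalities defining `T_l(z)`. For `n` odd that sum telescopes to
`c - 2l + 2s`, so the objective is at most a quadratic in `s`, with equality at `z = (c^m)` and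
`t = (l, …, l, s)`. Over the integers `s ≥ 0` with `c - 2l + 2s ≥ 0` the quadratic is decreasing,
so it is largest at the least such `s`, where its value is `b(l,n,c)`.
-/

open Finset

/-- The value of the objective at `z = (c^m)` and `t = (l, …, l, s)`. -/
def endValue (m l c s : ℤ) : ℤ :=
  (m - l) * (2 * l + c) + l * (c - 1) + s * (1 - (c - 2 * l + 2 * s))

/-- The integers `s` that can be the last term of a member of `T_l(z)` when `n` is odd and
`z_{l+1} = c`, apart from the bound `s ≤ l`. -/
def lastTerms (l c : ℤ) : Set ℤ := {s | 0 ≤ s ∧ 0 ≤ c - 2 * l + 2 * s}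

/-- The least element of `lastTerms l c`, namely `⌈(2l - c) / 2⌉` cut off at `0`. -/
def minLastTerm (l c : ℤ) : ℤ := max (l - c / 2) 0

theorem isLeast_minLastTerm (l c : ℤ) : IsLeast (lastTerms l c) (minLastTerm l c) := by
  constructor
  · constructor <;> grind [minLastTerm]
  · rintro s ⟨hs, hD⟩
    grind [minLastTerm]

theorem minLastTerm_le {l c : ℤ} (hl : 0 ≤ l) (hc : 0 ≤ c) : minLastTerm l c ≤ l :=
  max_le (by omega) hl

theorem antitoneOn_endValue (m l c : ℤ) : AntitoneOn (endValue m l c) (lastTerms l c) := by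
  rintro s ⟨hs, hD⟩ s' - hss'
  obtain rfl | hlt := hss'.eq_or_lt
  · rfl
  -- This is where integrality enters: `c - 2 * l + 2 * s - 1` can be `-1`.
  have hfactor : 0 ≤ c - 2 * l + 2 * s' - 1 := by omega
  have hmul : s * (c - 2 * l + 2 * s - 1) ≤ s' * (c - 2 * l + 2 * s' - 1) :=
    calc s * (c - 2 * l + 2 * s - 1) ≤ s * (c - 2 * l + 2 * s' - 1) := by gcongr
      _ ≤ s' * (c - 2 * l + 2 * s' - 1) := by gcongr
  unfold endValue
  linarith

theorem endValue_minLastTerm (n l : ℕ) (c : ℤ) :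
    endValue (n / 2 : ℕ) l c (minLastTerm l c) = bfun l n c := by
  unfold endValue bfun
  split_ifs with h
  · have hzero : minLastTerm l c * (1 - (c - 2 * l + 2 * minLastTerm l c)) = 0 := by
      rcases h with hlt | ⟨hlt, q, rfl⟩
      · rw [show minLastTerm l c = 0 by grind [minLastTerm], zero_mul]
      · have hslack : 2 * q + 1 - 2 * l + 2 * minLastTerm l (2 * q + 1) = 1 := by
          grind [minLastTerm]
        rw [hslack, sub_self, mul_zero]
    rw [hzero, add_zero]
  · have heven : Even c := by grind
    have hmin : minLastTerm l c = l - c / 2 := by grind [minLastTerm]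
    have hslack : c - 2 * l + 2 * minLastTerm l c = 0 := by
      rw [hmin, mul_sub, Int.two_mul_ediv_two_of_even heven]
      ring
    rw [hslack, hmin]
    ring

theorem isGreatest_endValue (n l : ℕ) (c : ℤ) :
    IsGreatest (endValue (n / 2 : ℕ) l c '' lastTerms l c) (bfun l n c) :=
  endValue_minLastTerm n l c ▸ (antitoneOn_endValue _ _ _).map_isLeast (isLeast_minLastTerm l c)

/-- The quantity to be maximised, for `z_1 = c`. -/
def regObjective (m n l : ℕ) (c : ℤ) (z t : ℕ → ℤ) : ℤ :=
  (∑ i ∈ Icc (l + 1) m, z i) + (l : ℤ) * (c - 1) + tsize n l t - ffun n l z t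

/-- The slack in the `i`-th inequality
`z^{(2)}_{2l+i} - z^{(2)}_{2l+i+1} ≥ 2t_i - 2t_{i+1}` defining `T_l(z)`. -/
def slack (l : ℕ) (z t : ℕ → ℤ) (i : ℕ) : ℤ :=
  (zdub z (2 * l + i) - zdub z (2 * l + i + 1)) - (2 * t i - 2 * t (i + 1))

theorem ffun_eq_sum_mul_slack (n l : ℕ) (z t : ℕ → ℤ) :
    ffun n l z t = ∑ i ∈ Icc 1 (n - 2 * l - 1), t (i + 1) * slack l z t i :=
  rfl

theorem sum_slack (l N : ℕ) (z t : ℕ → ℤ) :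
    ∑ i ∈ Icc 1 N, slack l z t i =
      zdub z (2 * l + 1) - zdub z (2 * l + N + 1) - 2 * (t 1 - t (N + 1)) := by
  induction N with
  | zero => simp
  | succ N ih =>
    rw [sum_Icc_succ_top (by omega), ih, slack]
    ring_nf

section UpperBound

variable {m n l : ℕ} {z t : ℕ → ℤ}

theorem IsPart.antitoneOn (hz : IsPart m z) : AntitoneOn z (Set.Icc 1 m) :=
  antitoneOn_of_add_one_le Set.ordConnected_Icc fun i _ hi hi' => hz.1 i hi.1 hi'.2

theorem IsPart.sum_Icc_le (hz : IsPart m z) {j : ℕ} (hj : 1 ≤ j) :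
    ∑ i ∈ Icc j m, z i ≤ ((m + 1 - j : ℕ) : ℤ) * z j := by
  rw [← Nat.card_Icc, ← nsmul_eq_mul]
  refine sum_le_card_nsmul _ _ _ fun i hi => ?_
  obtain ⟨hji, him⟩ := mem_Icc.mp hi
  exact hz.antitoneOn ⟨hj, hji.trans him⟩ ⟨hj.trans hji, him⟩ hji

theorem antitoneOn_of_mem_Tset (ht : t ∈ Tset n l z) : AntitoneOn t (Set.Icc 1 (n - 2 * l)) :=
  antitoneOn_of_add_one_le Set.ordConnected_Icc fun i _ hi hi' => ht.2.1 i hi.1 hi'.2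

theorem slack_nonneg_of_mem_Tset (ht : t ∈ Tset n l z) {i : ℕ}
    (hi : i ∈ Icc 1 (n - 2 * l - 1)) : 0 ≤ slack l z t i :=
  sub_nonneg.mpr <| ht.2.2.2.2 i (mem_Icc.mp hi).1 (mem_Icc.mp hi).2

theorem tsize_le_of_mem_Tset (ht : t ∈ Tset n l z) (hln : 2 * l < n) :
    tsize n l t ≤ ((n - 2 * l - 1 : ℕ) : ℤ) * l + t (n - 2 * l) := by
  obtain ⟨N, hN⟩ : ∃ N, n - 2 * l = N + 1 := ⟨n - 2 * l - 1, by omega⟩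
  have hanti := antitoneOn_of_mem_Tset ht
  rw [hN] at hanti
  rw [tsize, hN, sum_Icc_succ_top (by omega), Nat.add_sub_cancel]
  gcongr
  calc ∑ i ∈ Icc 1 N, t i ≤ #(Icc 1 N) • (l : ℤ) := by
        refine sum_le_card_nsmul _ _ _ fun i hi => ht.1 ▸ ?_
        obtain ⟨h1, hiN⟩ := mem_Icc.mp hi
        exact hanti ⟨le_rfl, by omega⟩ ⟨h1, by omega⟩ h1
    _ = N * l := by simp

theorem mul_sum_slack_le_ffun (ht : t ∈ Tset n l z) :
    t (n - 2 * l) * ∑ i ∈ Icc 1 (n - 2 * l - 1), slack l z t i ≤ ffun n l z t := by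
  rw [ffun_eq_sum_mul_slack, mul_sum]
  refine sum_le_sum fun i hi => mul_le_mul_of_nonneg_right ?_ (slack_nonneg_of_mem_Tset ht hi)
  obtain ⟨h1, hin⟩ := mem_Icc.mp hi
  exact antitoneOn_of_mem_Tset ht ⟨by omega, by omega⟩ ⟨by omega, le_rfl⟩ (by omega)

theorem sum_slack_of_isPart (hz : IsPart m z) (hlm : l ≤ m) (ht : t ∈ Tset (2 * m + 1) l z) :
    ∑ i ∈ Icc 1 (2 * m + 1 - 2 * l - 1), slack l z t i =
      z (l + 1) - 2 * l + 2 * t (2 * m + 1 - 2 * l) := by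
  have hfirst : zdub z (2 * l + 1) = z (l + 1) := congrArg z (by omega)
  have hlast : zdub z (2 * l + (2 * m + 1 - 2 * l - 1) + 1) = 0 := hz.2.2 _ (by omega)
  rw [sum_slack, hfirst, hlast, ht.1, Nat.sub_add_cancel (by omega)]
  ring

theorem last_mem_lastTerms (hz : IsPart m z) (hlm : l ≤ m) (ht : t ∈ Tset (2 * m + 1) l z) :
    t (2 * m + 1 - 2 * l) ∈ lastTerms l (z (l + 1)) :=
  ⟨ht.2.2.1 _ (by omega) le_rfl,
    sum_slack_of_isPart hz hlm ht ▸ sum_nonneg fun _ => slack_nonneg_of_mem_Tset ht⟩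

theorem regObjective_le_endValue (hz : IsPart m z) (hlm : l ≤ m)
    (ht : t ∈ Tset (2 * m + 1) l z) :
    regObjective m (2 * m + 1) l (z (l + 1)) z t ≤
      endValue m l (z (l + 1)) (t (2 * m + 1 - 2 * l)) := by
  have hsum := hz.sum_Icc_le (Nat.le_add_left 1 l)
  have hsize := tsize_le_of_mem_Tset ht (by omega)
  have hffun := mul_sum_slack_le_ffun ht
  rw [sum_slack_of_isPart hz hlm ht] at hffun
  rw [show ((m + 1 - (l + 1) : ℕ) : ℤ) = m - l by omega] at hsum
  rw [show ((2 * m + 1 - 2 * l - 1 : ℕ) : ℤ) = 2 * (m - l) by omega] at hsize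
  unfold regObjective endValue
  linarith

end UpperBound

section Extremal

/-- The partition `(c^m)` with `m` parts equal to `c`. -/
def constPart (m : ℕ) (c : ℤ) : ℕ → ℤ := fun i => if 1 ≤ i ∧ i ≤ m then c else 0

/-- The sequence `(a, …, a, s)` of length `N`, indexed from `1` and zero outside `1, …, N`. -/
def constThenLast (N : ℕ) (a s : ℤ) : ℕ → ℤ :=
  fun i => if 1 ≤ i ∧ i < N then a else if i = N then s else 0

variable {m l : ℕ} {c s : ℤ}

theorem isPart_constPart (m : ℕ) (hc : 0 ≤ c) : IsPart m (constPart m c) := by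
  refine ⟨?_, ?_, ?_⟩ <;> grind [constPart]

theorem sum_constPart (m l : ℕ) (c : ℤ) :
    ∑ i ∈ Icc (l + 1) m, constPart m c i = ((m - l : ℕ) : ℤ) * c := by
  have hconst : ∀ i ∈ Icc (l + 1) m, constPart m c i = c := by grind [constPart]
  simp [sum_congr rfl hconst]

theorem sum_constThenLast (N : ℕ) (a s : ℤ) :
    ∑ i ∈ Icc 1 (N + 1), constThenLast (N + 1) a s i = N * a + s := by
  have hconst : ∀ i ∈ Icc 1 N, constThenLast (N + 1) a s i = a := by grind [constThenLast]
  rw [sum_Icc_succ_top (by omega), sum_congr rfl hconst]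
  simp [constThenLast]

theorem slack_constPart_constThenLast (m l : ℕ) (c s : ℤ) {i : ℕ}
    (hi : i ∈ Icc 1 (2 * m + 1 - 2 * l - 1)) :
    slack l (constPart m c) (constThenLast (2 * m + 1 - 2 * l) l s) i =
      if i = 2 * m + 1 - 2 * l - 1 then c - 2 * l + 2 * s else 0 := by
  grind [slack, zdub, constPart, constThenLast]

theorem constThenLast_mem_Tset (hlm : l < m) (hs : s ∈ lastTerms l c) (hsl : s ≤ l) :
    constThenLast (2 * m + 1 - 2 * l) l s ∈ Tset (2 * m + 1) l (constPart m c) := by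
  obtain ⟨hs0, hD⟩ := hs
  refine ⟨by grind [constThenLast], by grind [constThenLast], by grind [constThenLast],
    by grind [constThenLast], fun i h1 hi => sub_nonneg.mp ?_⟩
  change 0 ≤ slack l (constPart m c) (constThenLast (2 * m + 1 - 2 * l) l s) i
  rw [slack_constPart_constThenLast m l c s (mem_Icc.mpr ⟨h1, hi⟩)]
  split_ifs
  exacts [hD, le_rfl]

theorem ffun_constPart_constThenLast (hlm : l < m) (c s : ℤ) :
    ffun (2 * m + 1) l (constPart m c) (constThenLast (2 * m + 1 - 2 * l) l s) =
      s * (c - 2 * l + 2 * s) := by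
  rw [ffun_eq_sum_mul_slack,
    sum_congr rfl fun i hi => by rw [slack_constPart_constThenLast m l c s hi, mul_ite, mul_zero],
    sum_ite_eq', if_pos (by grind), Nat.sub_add_cancel (by omega)]
  simp [constThenLast]

theorem regObjective_constPart_constThenLast (hlm : l < m) (c s : ℤ) :
    regObjective m (2 * m + 1) l c (constPart m c) (constThenLast (2 * m + 1 - 2 * l) l s) =
      endValue m l c s := by
  have hN : 2 * m + 1 - 2 * l = 2 * (m - l) + 1 := by omega
  rw [regObjective, ffun_constPart_constThenLast hlm, sum_constPart, tsize, hN, sum_constThenLast,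
    endValue]
  push_cast [hlm.le]
  ring

end Extremal

/-- Lemma 4.4: for `n` odd, `m = (n-1)/2`, `0 ≤ l ≤ m-1` and `c ≥ 0`, the maximum of
`Σ_{i=l+1}^m z_i + l(c-1) + |t| - f_l(z,t)` over all `z ∈ P(m)` with
`z₁ = ⋯ = z_{l+1} = c` and all `t ∈ 𝒯_l(z)` equals `b(l,n,c)`, attained at
`z = (c^m)` for some `t ∈ 𝒯_l(z)`.  (Via the identity for `reg(J_{z,l})`, this
computes `max{reg(J_{z,l}) : z₁ = ⋯ = z_{l+1} = c} = reg(J_{(c^m),l}) = b(l,n,c)`.) -/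
theorem reg_J_odd (n m l : ℕ) (c : ℤ) (hn : Odd n) (h3 : 3 ≤ n) (hm : m = (n - 1) / 2)
    (hl : l ≤ m - 1) (hc : 0 ≤ c) :
    IsGreatest
      { v : ℤ | ∃ z t : ℕ → ℤ, IsPart m z ∧ (∀ i, 1 ≤ i → i ≤ l + 1 → z i = c) ∧
          t ∈ Tset n l z ∧
          v = (∑ i ∈ Finset.Icc (l + 1) m, z i) + (l : ℤ) * (c - 1)
                + tsize n l t - ffun n l z t }
      (bfun l n c) ∧
    ∃ t ∈ Tset n l (fun i => if 1 ≤ i ∧ i ≤ m then c else 0),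
      (∑ i ∈ Finset.Icc (l + 1) m, (if 1 ≤ i ∧ i ≤ m then c else 0)) + (l : ℤ) * (c - 1)
          + tsize n l t - ffun n l (fun i => if 1 ≤ i ∧ i ≤ m then c else 0) t
        = bfun l n c := by
  obtain ⟨k, rfl⟩ := hn
  obtain rfl : m = k := by omega
  have hlm : l < m := by omega
  have hhalf : (2 * m + 1) / 2 = m := by omega
  have hmem : constThenLast (2 * m + 1 - 2 * l) l (minLastTerm l c) ∈
      Tset (2 * m + 1) l (constPart m c) :=
    constThenLast_mem_Tset hlm (isLeast_minLastTerm l c).1 (minLastTerm_le (by positivity) hc)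
  have hval : regObjective m (2 * m + 1) l c (constPart m c)
      (constThenLast (2 * m + 1 - 2 * l) l (minLastTerm l c)) = bfun l (2 * m + 1) c := by
    rw [regObjective_constPart_constThenLast hlm, ← endValue_minLastTerm, hhalf]
  refine ⟨⟨⟨constPart m c, _, isPart_constPart m hc, fun i h1 hi => if_pos ⟨h1, by omega⟩, hmem,
    hval.symm⟩, ?_⟩, _, hmem, hval⟩
  rintro v ⟨z, t, hz, hzc, ht, rfl⟩
  obtain rfl : z (l + 1) = c := hzc (l + 1) (by omega) le_rfl
  refine (regObjective_le_endValue hz hlm.le ht).trans ((isGreatest_endValue _ _ _).2 ?_)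
  exact ⟨_, last_mem_lastTerms hz hlm.le ht, by rw [hhalf]⟩
end

section
/- Let n ≥ 2, m = ⌊n/2⌋, 0 ≤ l ≤ m−1, and z ∈ P(m) with z_1 = ... = z_{l+1}. Let α = (α_1 ≥ α_2 ≥ ... ≥ α_{2l}) ∈ ℤ^{2l} satisfy α_{2i−1} = α_{2i} for 1 ≤ i ≤ l and α_1 ≤ z_1 + n − 2l. Let β ∈ ℤ^{n−2l} be defined by β_i = z^{(2)}_{2l+i} + n − 1, let γ = (α_1,...,α_{2l},β_1,...,β_{n−2l}) ∈ ℤ^n, and ρ = (n−1, n−2, ..., 1, 0). Assume the entries of γ+ρ are pairwise distinct, and let σ be the unique permutation of {1,...,n} such that the sequence γ̄ defined by γ̄_{σ(i)} = (γ+ρ)_i is strictly decreasing. Then: (a) σ(2l+1) = 1; (b) for each 1 ≤ i ≤ n−2l, u_i := 2l + i − σ(2l+i) is a nonnegative even integer; and (c) the sequence t = (u_1/2, u_2/2, ..., u_{n−2l}/2) belongs to T_l(z). -/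
/-!
If `σ` sorts `γ + ρ` into decreasing order, then `σ p` is the number of entries that are at least
the `p`-th one. The entries of `β + ρ` decrease strictly, so for `p > 2l` the displacement
`p - σ p` is the number of entries of `α + ρ` below the `p`-th entry of `γ + ρ`. The entries of
`α + ρ` come in pairs `x + 1, x` of consecutive integers, so an integer different from all of them
exceeds both members of a pair or neither, and the displacement is even. The bound on `α` puts all
of `α + ρ` below the first entry of `β + ρ`, unless that entry is one of the first pair. Finally,
the entries of `α + ρ` counted by the `p`-th displacement but not by the next one are distinct
integers strictly between two consecutive entries of `β + ρ`, which bounds their number.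
-/

section CountBelow

variable {R : Type*} [LinearOrder R] {a : ℕ → R}

/-- The number of those among the first `k` entries of the 1-indexed sequence `a` that lie strictly
below `x`. It measures how far an entry `x` placed after them moves when `a` is sorted. -/
def countBelow (a : ℕ → R) (k : ℕ) (x : R) : ℕ :=
  ((Finset.Icc 1 k).filter (a · < x)).card

theorem countBelow_mono (a : ℕ → R) (k : ℕ) : Monotone (countBelow a k) := fun _ _ hxy =>
  Finset.card_le_card <| Finset.monotone_filter_right _ fun _ _ hj => lt_of_lt_of_le hj hxy

theorem countBelow_eq_self {k : ℕ} {x : R} (h : ∀ j ∈ Set.Icc 1 k, a j < x) :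
    countBelow a k x = k := by
  rw [countBelow, Finset.filter_true_of_mem fun j hj => h j (Finset.mem_Icc.mp hj),
    Nat.card_Icc, Nat.add_sub_cancel]

theorem countBelow_succ (a : ℕ → R) (k : ℕ) (x : R) :
    countBelow a (k + 1) x = countBelow a k x + if a (k + 1) < x then 1 else 0 := by
  simp only [countBelow, Finset.card_filter, Finset.sum_Icc_succ_top (Nat.le_add_left 1 k)]

theorem even_countBelow_two_mul {l : ℕ} {x : R}
    (h : ∀ i, 1 ≤ i → i ≤ l → (a (2 * i - 1) < x ↔ a (2 * i) < x)) :
    Even (countBelow a (2 * l) x) := by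
  induction l with
  | zero => simp [countBelow]
  | succ l ih =>
    have hpair : a (2 * l + 1) < x ↔ a (2 * l + 1 + 1) < x := h (l + 1) (by omega) le_rfl
    have hrest := ih fun i hi hil => h i hi (by omega)
    rw [Nat.mul_succ, countBelow_succ, countBelow_succ, if_congr hpair rfl rfl, add_assoc]
    exact hrest.add (Even.add_self _)

theorem countBelow_lt_add_sub {a : ℕ → ℤ} {k : ℕ} {x y : ℤ} (ha : Set.InjOn a (Set.Icc 1 k))
    (hx : ∀ j ∈ Set.Icc 1 k, a j ≠ x) (hxy : x < y) :
    (countBelow a k y : ℤ) < countBelow a k x + (y - x) := by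
  let between := (Finset.Icc 1 k).filter fun j => a j ∈ Finset.Ioo x y
  have hcover : (Finset.Icc 1 k).filter (a · < y) ⊆
      (Finset.Icc 1 k).filter (a · < x) ∪ between := by
    intro j hj
    simp only [between, Finset.mem_union, Finset.mem_filter, Finset.mem_Icc,
      Finset.mem_Ioo] at hj ⊢
    have := hx j hj.1
    omega
  have hcount : countBelow a k y ≤ countBelow a k x + between.card :=
    (Finset.card_le_card hcover).trans (Finset.card_union_le _ _)
  have hbetween : between.card ≤ (Finset.Ioo x y).card :=
    Finset.card_le_card_of_injOn a (fun j hj => (Finset.mem_filter.mp hj).2) <|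
      ha.mono fun j hj => Finset.mem_Icc.mp (Finset.mem_filter.mp hj).1
  rw [Int.card_Ioo] at hbetween
  omega

end CountBelow

/-- The bijection `σ` of `{1, …, n}` sends each index of the 1-indexed sequence `a` to the position
of its entry once `a 1, …, a n` are sorted into strictly decreasing order; in particular these
entries are distinct. -/
structure IsDecreasingSort {R : Type*} [LinearOrder R] (n : ℕ) (a : ℕ → R) (σ : ℕ → ℕ) :
    Prop where
  bijOn : Set.BijOn σ (Set.Icc 1 n) (Set.Icc 1 n)
  lt_iff : ∀ i ∈ Set.Icc 1 n, ∀ j ∈ Set.Icc 1 n, (σ i < σ j ↔ a j < a i)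

namespace IsDecreasingSort

variable {R : Type*} [LinearOrder R] {n k p : ℕ} {a : ℕ → R} {σ : ℕ → ℕ}

theorem le_iff (h : IsDecreasingSort n a σ) {i j : ℕ} (hi : i ∈ Set.Icc 1 n)
    (hj : j ∈ Set.Icc 1 n) : σ i ≤ σ j ↔ a j ≤ a i := by
  rw [← not_lt, h.lt_iff j hj i hi, not_lt]

theorem injOn (h : IsDecreasingSort n a σ) : Set.InjOn a (Set.Icc 1 n) := fun _ hi _ hj hij =>
  h.bijOn.injOn hi hj <| le_antisymm ((h.le_iff hi hj).mpr hij.ge) ((h.le_iff hj hi).mpr hij.le)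

theorem card_filter_le (h : IsDecreasingSort n a σ) (hp : p ∈ Set.Icc 1 n) :
    ((Finset.Icc 1 n).filter (a p ≤ a ·)).card = σ p := by
  have hcard : ((Finset.Icc 1 n).filter (a p ≤ a ·)).card = (Finset.Icc 1 (σ p)).card := by
    refine Finset.card_nbij σ (fun j hj => ?_) (h.bijOn.injOn.mono fun j hj => ?_) fun q hq => ?_
    · obtain ⟨hjn, hpj⟩ := Finset.mem_filter.mp hj
      have hjn := Finset.mem_Icc.mp hjn
      exact Finset.mem_Icc.mpr ⟨(h.bijOn.mapsTo hjn).1, (h.le_iff hjn hp).mpr hpj⟩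
    · exact Finset.mem_Icc.mp (Finset.mem_filter.mp hj).1
    · obtain ⟨hq1, hqp⟩ := Finset.mem_Icc.mp hq
      obtain ⟨j, hj, rfl⟩ := h.bijOn.surjOn ⟨hq1, hqp.trans (h.bijOn.mapsTo hp).2⟩
      exact ⟨j, Finset.mem_filter.mpr ⟨Finset.mem_Icc.mpr hj, (h.le_iff hj hp).mp hqp⟩, rfl⟩
  rw [hcard, Nat.card_Icc, Nat.add_sub_cancel]

theorem countBelow_add (h : IsDecreasingSort n a σ) (ha : StrictAntiOn a (Set.Ioc k n))
    (hp : p ∈ Set.Ioc k n) : countBelow a k (a p) + σ p = p := by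
  have hbelow : (Finset.Icc 1 k).filter (a · < a p) = (Finset.Icc 1 p).filter (a · < a p) := by
    ext j
    simp only [Finset.mem_filter, Finset.mem_Icc, and_congr_left_iff]
    refine fun hj => ⟨fun hjk => ⟨hjk.1, hjk.2.trans hp.1.le⟩, fun hjp => ⟨hjp.1, ?_⟩⟩
    by_contra! hkj
    exact hj.not_ge (ha.antitoneOn ⟨hkj, hjp.2.trans hp.2⟩ hp hjp.2)
  have habove : (Finset.Icc 1 n).filter (a p ≤ a ·) =
      (Finset.Icc 1 p).filter (¬ a · < a p) := by
    ext j
    simp only [Finset.mem_filter, Finset.mem_Icc, not_lt, and_congr_left_iff]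
    refine fun hj => ⟨fun hjn => ⟨hjn.1, ?_⟩, fun hjp => ⟨hjp.1, hjp.2.trans hp.2⟩⟩
    by_contra! hpj
    exact hj.not_gt (ha hp ⟨hp.1.trans hpj, hjn.2⟩ hpj)
  rw [← h.card_filter_le ⟨Nat.one_le_of_lt hp.1, hp.2⟩, countBelow, hbelow, habove,
    Finset.card_filter_add_card_filter_not, Nat.card_Icc, Nat.add_sub_cancel]

theorem apply_le_self (h : IsDecreasingSort n a σ) (ha : StrictAntiOn a (Set.Ioc k n))
    (hp : p ∈ Set.Ioc k n) : σ p ≤ p :=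
  (Nat.le_add_left _ _).trans (h.countBelow_add ha hp).le

theorem sub_apply_eq_countBelow (h : IsDecreasingSort n a σ) (ha : StrictAntiOn a (Set.Ioc k n))
    (hp : p ∈ Set.Ioc k n) : p - σ p = countBelow a k (a p) :=
  Nat.sub_eq_of_eq_add (h.countBelow_add ha hp).symm

theorem antitoneOn_sub_apply (h : IsDecreasingSort n a σ) (ha : StrictAntiOn a (Set.Ioc k n)) :
    AntitoneOn (fun p => p - σ p) (Set.Ioc k n) := by
  intro p hp q hq hpq
  simp only [h.sub_apply_eq_countBelow ha hp, h.sub_apply_eq_countBelow ha hq]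
  exact countBelow_mono a k (ha.antitoneOn hp hq hpq)

end IsDecreasingSort

/-- The sequence `γ + ρ` for `ρ = (n - 1, …, 1, 0)`; the subtraction takes place in `ℤ`. -/
def rhoShift (n : ℕ) (γ : ℕ → ℤ) (i : ℕ) : ℤ :=
  γ i + ((n : ℤ) - (i : ℤ))

section RhoShift

variable {n l : ℕ} {γ : ℕ → ℤ}

theorem strictAntiOn_rhoShift {s : Set ℕ} (hγ : AntitoneOn γ s) :
    StrictAntiOn (rhoShift n γ) s := by
  intro i hi j hj hij
  have := hγ hi hj hij.le
  simp only [rhoShift]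
  omega

theorem rhoShift_pair {i : ℕ} (hi : 1 ≤ i) (h : γ (2 * i - 1) = γ (2 * i)) :
    rhoShift n γ (2 * i - 1) = rhoShift n γ (2 * i) + 1 := by
  simp only [rhoShift]
  omega

theorem even_countBelow_rhoShift (hpair : ∀ i, 1 ≤ i → i ≤ l → γ (2 * i - 1) = γ (2 * i))
    {x : ℤ} (hx : ∀ j ∈ Set.Icc 1 (2 * l), rhoShift n γ j ≠ x) :
    Even (countBelow (rhoShift n γ) (2 * l) x) := by
  refine even_countBelow_two_mul fun i hi hil => ?_
  have hconsecutive := rhoShift_pair (n := n) hi (hpair i hi hil)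
  have hne := hx (2 * i - 1) ⟨by omega, by omega⟩
  omega

theorem rhoShift_lt_head (hpair : ∀ i, 1 ≤ i → i ≤ l → γ (2 * i - 1) = γ (2 * i))
    (hbound : ∀ j ∈ Set.Icc 1 (2 * l), γ j ≤ γ (2 * l + 1) + 1 - 2 * l)
    (hne : ∀ j ∈ Set.Icc 1 (2 * l), rhoShift n γ j ≠ rhoShift n γ (2 * l + 1))
    {j : ℕ} (hj : j ∈ Set.Icc 1 (2 * l)) : rhoShift n γ j < rhoShift n γ (2 * l + 1) := by
  obtain ⟨hj1, hjl⟩ := hj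
  have hweak : rhoShift n γ j ≤ rhoShift n γ (2 * l + 1) + 2 - j := by
    have := hbound j ⟨hj1, hjl⟩
    simp only [rhoShift]
    omega
  have hnej := hne j ⟨hj1, hjl⟩
  rcases (by omega : j = 1 ∨ 2 ≤ j) with rfl | hj2
  · have hfirst : rhoShift n γ 1 = rhoShift n γ 2 + 1 :=
      rhoShift_pair le_rfl (hpair 1 le_rfl (by omega))
    have hne2 := hne 2 ⟨by omega, by omega⟩
    omega
  · omega

namespace IsDecreasingSort

variable {σ : ℕ → ℕ}

theorem rhoShift_ne (h : IsDecreasingSort n (rhoShift n γ) σ) {k p : ℕ} (hp : p ∈ Set.Ioc k n) :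
    ∀ j ∈ Set.Icc 1 k, rhoShift n γ j ≠ rhoShift n γ p := fun _ ⟨hj1, hjk⟩ =>
  have hjp := hjk.trans_lt hp.1
  h.injOn.ne ⟨hj1, hjp.le.trans hp.2⟩ ⟨hj1.trans hjp.le, hp.2⟩ hjp.ne

theorem apply_head_eq_one (h : IsDecreasingSort n (rhoShift n γ) σ) (hln : 2 * l + 1 ≤ n)
    (hγ : AntitoneOn γ (Set.Ioc (2 * l) n))
    (hpair : ∀ i, 1 ≤ i → i ≤ l → γ (2 * i - 1) = γ (2 * i))
    (hbound : ∀ j ∈ Set.Icc 1 (2 * l), γ j ≤ γ (2 * l + 1) + 1 - 2 * l) :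
    σ (2 * l + 1) = 1 := by
  have hmem : 2 * l + 1 ∈ Set.Ioc (2 * l) n := ⟨Nat.lt_succ_self _, hln⟩
  have hcount := h.countBelow_add (strictAntiOn_rhoShift hγ) hmem
  rw [countBelow_eq_self fun _ => rhoShift_lt_head hpair hbound (h.rhoShift_ne hmem)] at hcount
  exact Nat.add_left_cancel hcount

theorem even_sub_apply (h : IsDecreasingSort n (rhoShift n γ) σ)
    (hγ : AntitoneOn γ (Set.Ioc (2 * l) n))
    (hpair : ∀ i, 1 ≤ i → i ≤ l → γ (2 * i - 1) = γ (2 * i))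
    {p : ℕ} (hp : p ∈ Set.Ioc (2 * l) n) : Even (p - σ p) := by
  rw [h.sub_apply_eq_countBelow (strictAntiOn_rhoShift hγ) hp]
  exact even_countBelow_rhoShift hpair (h.rhoShift_ne hp)

theorem sub_apply_sub_succ_le (h : IsDecreasingSort n (rhoShift n γ) σ) {k p : ℕ}
    (hγ : AntitoneOn γ (Set.Ioc k n)) (hkp : k < p) (hpn : p < n) :
    ((p - σ p : ℕ) : ℤ) - ((p + 1 - σ (p + 1) : ℕ) : ℤ) ≤ γ p - γ (p + 1) := by
  have hanti := strictAntiOn_rhoShift (n := n) hγ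
  have hp : p ∈ Set.Ioc k n := ⟨hkp, hpn.le⟩
  have hp' : p + 1 ∈ Set.Ioc k n := ⟨hkp.trans p.lt_succ_self, hpn⟩
  have hcount := countBelow_lt_add_sub
    (h.injOn.mono (Set.Icc_subset_Icc_right (hkp.trans hpn).le)) (h.rhoShift_ne hp')
    (hanti hp hp' p.lt_succ_self)
  have hstep : rhoShift n γ p - rhoShift n γ (p + 1) = γ p - γ (p + 1) + 1 := by
    simp only [rhoShift]
    omega
  rw [h.sub_apply_eq_countBelow hanti hp, h.sub_apply_eq_countBelow hanti hp']
  omega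

end IsDecreasingSort

end RhoShift

theorem IsPart.antitoneOn_s16 {k : ℕ} {y : ℕ → ℤ} (hy : IsPart k y) : AntitoneOn y (Set.Ici 1) := by
  obtain ⟨hdecreasing, hnonneg, hzero⟩ := hy
  refine antitoneOn_of_add_one_le Set.ordConnected_Ici fun i _ hi _ => ?_
  rcases lt_or_ge i k with hik | hki
  · exact hdecreasing i hi hik
  · rw [hzero (i + 1) (by omega)]
    rcases hki.eq_or_lt with rfl | hki
    · exact hnonneg k hi le_rfl
    · exact (hzero i (.inr hki)).ge

theorem antitoneOn_zdub {n l : ℕ} {z : ℕ → ℤ}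
    (hz : AntitoneOn z (Set.Icc (l + 1) ((n + 1) / 2))) :
    AntitoneOn (zdub z) (Set.Ioc (2 * l) n) := by
  rintro i ⟨hi, _⟩ j ⟨hj, hjn⟩ hij
  exact hz ⟨by omega, by omega⟩ ⟨by omega, by omega⟩ (by omega)

theorem half_mem_Tset {n l : ℕ} {z : ℕ → ℤ} {u : ℕ → ℕ} (hln : 2 * l + 1 ≤ n)
    (hhead : u 1 = 2 * l) (heven : ∀ i, 1 ≤ i → i ≤ n - 2 * l → Even (u i))
    (hmono : ∀ i, 1 ≤ i → i < n - 2 * l → u (i + 1) ≤ u i)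
    (hgap : ∀ i, 1 ≤ i → i < n - 2 * l →
      (u i : ℤ) - u (i + 1) ≤ zdub z (2 * l + i) - zdub z (2 * l + i + 1)) :
    (fun i => if 1 ≤ i ∧ i ≤ n - 2 * l then ((u i / 2 : ℕ) : ℤ) else 0) ∈ Tset n l z := by
  refine ⟨?_, fun i hi hin => ?_, fun i hi hin => ?_, fun i hi => ?_, fun i hi _ => ?_⟩ <;>
    dsimp only
  · rw [if_pos ⟨le_rfl, by omega⟩, hhead, Nat.mul_div_cancel_left l two_pos]
  · rw [if_pos ⟨by omega, by omega⟩, if_pos ⟨by omega, by omega⟩]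
    exact_mod_cast Nat.div_le_div_right (hmono i hi hin)
  · rw [if_pos ⟨hi, hin⟩]
    exact Int.natCast_nonneg _
  · rw [if_neg (by omega)]
  · rw [if_pos ⟨by omega, by omega⟩, if_pos ⟨by omega, by omega⟩]
    have hdouble : ∀ j, 1 ≤ j → j ≤ n - 2 * l → 2 * ((u j / 2 : ℕ) : ℤ) = u j := fun j hj hjn =>
      mod_cast Nat.two_mul_div_two_of_even (heven j hj hjn)
    rw [hdouble i hi (by omega), hdouble (i + 1) (by omega) (by omega)]
    exact hgap i hi (by omega)

theorem bott_sorting_general {n l : ℕ} {z α γ : ℕ → ℤ} {σ : ℕ → ℕ} (hln : 2 * l + 1 ≤ n)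
    (hz : AntitoneOn z (Set.Icc (l + 1) ((n + 1) / 2)))
    (hpair : ∀ i, 1 ≤ i → i ≤ l → α (2 * i - 1) = α (2 * i))
    (hbound : ∀ i ∈ Set.Icc 1 (2 * l), α i ≤ z (l + 1) + (n : ℤ) - 2 * (l : ℤ))
    (hγ : ∀ i, 1 ≤ i → i ≤ n →
      γ i = if i ≤ 2 * l then α i else zdub z i + (n : ℤ) - 1)
    (hσ : IsDecreasingSort n (rhoShift n γ) σ) :
    σ (2 * l + 1) = 1 ∧
    (∀ i, 1 ≤ i → i ≤ n - 2 * l →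
      σ (2 * l + i) ≤ 2 * l + i ∧ Even (2 * l + i - σ (2 * l + i))) ∧
    (fun i => if 1 ≤ i ∧ i ≤ n - 2 * l then
        (((2 * l + i - σ (2 * l + i)) / 2 : ℕ) : ℤ) else 0) ∈ Tset n l z := by
  have htail : ∀ p ∈ Set.Ioc (2 * l) n, γ p = zdub z p + (n - 1) := fun p ⟨hlp, hpn⟩ => by
    rw [hγ p (by omega) hpn, if_neg (by omega), add_sub_assoc]
  have hhead : ∀ j ∈ Set.Icc 1 (2 * l), γ j = α j := fun j ⟨hj1, hjl⟩ => by
    rw [hγ j hj1 (by omega), if_pos hjl]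
  have hanti : AntitoneOn γ (Set.Ioc (2 * l) n) :=
    ((antitoneOn_zdub hz).add_const ((n : ℤ) - 1)).congr fun p hp => (htail p hp).symm
  have hpairγ : ∀ i, 1 ≤ i → i ≤ l → γ (2 * i - 1) = γ (2 * i) := fun i hi hil => by
    rw [hhead _ ⟨by omega, by omega⟩, hhead _ ⟨by omega, by omega⟩, hpair i hi hil]
  have hboundγ : ∀ j ∈ Set.Icc 1 (2 * l), γ j ≤ γ (2 * l + 1) + 1 - 2 * l := fun j hj => by
    have hmiddle : zdub z (2 * l + 1) = z (l + 1) := congrArg z (by omega)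
    rw [hhead j hj, htail _ ⟨by omega, hln⟩, hmiddle]
    linarith [hbound j hj]
  have hmem : ∀ i, 1 ≤ i → i ≤ n - 2 * l → 2 * l + i ∈ Set.Ioc (2 * l) n := fun i hi hin =>
    ⟨by omega, by omega⟩
  have hone : σ (2 * l + 1) = 1 := hσ.apply_head_eq_one hln hanti hpairγ hboundγ
  have heven : ∀ i, 1 ≤ i → i ≤ n - 2 * l → Even (2 * l + i - σ (2 * l + i)) := fun i hi hin =>
    hσ.even_sub_apply hanti hpairγ (hmem i hi hin)
  refine ⟨hone, fun i hi hin => ⟨hσ.apply_le_self (strictAntiOn_rhoShift hanti) (hmem i hi hin),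
    heven i hi hin⟩, half_mem_Tset hln (by rw [hone, Nat.add_sub_cancel]) heven
    (fun i hi hin => ?_) fun i hi hin => ?_⟩
  · exact hσ.antitoneOn_sub_apply (strictAntiOn_rhoShift hanti) (hmem i hi hin.le)
      (hmem (i + 1) (by omega) hin) (by omega)
  · have hgap := hσ.sub_apply_sub_succ_le hanti (p := 2 * l + i) (by omega) (by omega)
    rwa [htail _ (hmem i hi hin.le), htail (2 * l + i + 1) (hmem (i + 1) (by omega) hin),
      add_sub_add_right_eq_sub] at hgap

/-- Claims 1 and 2 in the proof of Theorem 3.4: for `γ = (α,β)` with `α` a dominant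
weight with pairwise equal consecutive entries and `α₁ ≤ z₁ + n - 2l`, and
`β_i = z^{(2)}_{2l+i} + n - 1`, if `γ + ρ` has distinct entries and `σ` is the unique
permutation of `{1,…,n}` sorting `γ + ρ` into strictly decreasing order
(so `σ i < σ j ↔ (γ+ρ)_i > (γ+ρ)_j`), then `σ(2l+1) = 1`, each displacement
`u_i = 2l + i - σ(2l+i)` is a nonnegative even integer, and
`t = (u₁/2, …, u_{n-2l}/2)` belongs to `𝒯_l(z)`. -/
theorem bott_sorting (n m l : ℕ) (z α γ : ℕ → ℤ) (σ : ℕ → ℕ)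
    (h2 : 2 ≤ n) (hm : m = n / 2) (hl : l ≤ m - 1)
    (hz : IsPart m z) (hzc : ∀ i, 1 ≤ i → i ≤ l + 1 → z i = z 1)
    (hα1 : ∀ i, 1 ≤ i → i < 2 * l → α (i + 1) ≤ α i)
    (hα2 : ∀ i, 1 ≤ i → i ≤ l → α (2 * i - 1) = α (2 * i))
    (hα3 : α 1 ≤ z 1 + (n : ℤ) - 2 * (l : ℤ))
    (hγ : ∀ i, 1 ≤ i → i ≤ n →
      γ i = if i ≤ 2 * l then α i else zdub z i + (n : ℤ) - 1)
    (hdist : ∀ i ∈ Finset.Icc 1 n, ∀ j ∈ Finset.Icc 1 n, i ≠ j →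
      γ i + ((n : ℤ) - (i : ℤ)) ≠ γ j + ((n : ℤ) - (j : ℤ)))
    (hσbij : Set.BijOn σ (Set.Icc 1 n) (Set.Icc 1 n))
    (hσ : ∀ i ∈ Finset.Icc 1 n, ∀ j ∈ Finset.Icc 1 n,
      (σ i < σ j ↔ γ j + ((n : ℤ) - (j : ℤ)) < γ i + ((n : ℤ) - (i : ℤ)))) :
    σ (2 * l + 1) = 1 ∧
    (∀ i, 1 ≤ i → i ≤ n - 2 * l →
      σ (2 * l + i) ≤ 2 * l + i ∧ Even (2 * l + i - σ (2 * l + i))) ∧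
    (fun i => if 1 ≤ i ∧ i ≤ n - 2 * l then
        (((2 * l + i - σ (2 * l + i)) / 2 : ℕ) : ℤ) else 0) ∈ Tset n l z := by
  have hα : AntitoneOn α (Set.Icc 1 (2 * l)) :=
    antitoneOn_of_add_one_le Set.ordConnected_Icc fun i _ hi hi' => hα1 i hi.1 hi'.2
  have hbound : ∀ i ∈ Set.Icc 1 (2 * l), α i ≤ z (l + 1) + (n : ℤ) - 2 * (l : ℤ) := by
    intro i hi
    rw [hzc (l + 1) (by omega) le_rfl]
    exact (hα ⟨le_rfl, hi.1.trans hi.2⟩ hi hi.1).trans hα3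
  exact bott_sorting_general (by omega) (hz.antitoneOn_s16.mono fun i hi => le_of_add_le_right hi.1)
    hα2 hbound hγ
    ⟨hσbij, fun i hi j hj => hσ i (Finset.mem_Icc.mpr hi) j (Finset.mem_Icc.mpr hj)⟩
end
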